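/- arXiv:2408.16858 — 2 statements merged into one kernel-verified Lean document; each statement's English description precedes it below -/
import Mathlib

section
/- Let n, k be positive integers with n > k and let Y be a positive semidefinite complex matrix indexed by (Fin n × Fin k) × (Fin n × Fin k) whose partial trace over the second factor equals k times the identity, i.e. for all i, j : Fin n, ∑_{a : Fin k} Y (i,a) (j,a) = if i = j then k else 0. Then ‖Y‖ ≤ k², where ‖·‖ is the ℓ²→ℓ² operator norm. -/
/-!
Write `Y = Bᴴ B`, so that `‖Y‖ = ‖B‖²` and it suffices to prove `‖B v‖ ≤ k ‖v‖`. Split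
`v = ∑ₐ vₐ ⊗ eₐ` into its `k` slices. Cauchy-Schwarz for the sum over `a` gives
`‖B v‖² ≤ k ∑ₐ ‖B (vₐ ⊗ eₐ)‖²`. For every `u` in `ℂⁿ` the partial trace condition says
`∑_b ‖B (u ⊗ e_b)‖² = k ‖u‖²` (`sum_norm_sq_apply_slice`), so a single term of that sum is at most
`k ‖u‖²`. Hence `‖B v‖² ≤ k · k ∑ₐ ‖vₐ‖² = k² ‖v‖²`.
-/

open Matrix
open scoped ComplexOrder

/-- The ℓ²→ℓ² operator norm of a matrix. -/
noncomputable def l2OpNorm {ι : Type*} [Fintype ι] [DecidableEq ι]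
    (X : Matrix ι ι ℂ) : ℝ :=
  ‖Matrix.toEuclideanCLM (𝕜 := ℂ) X‖

/-- The vector `u ⊗ e_b` in `ℂⁿ ⊗ ℂᵏ`. -/
noncomputable def slice {n k : ℕ} (u : Fin n → ℂ) (b : Fin k) :
    EuclideanSpace ℂ (Fin n × Fin k) :=
  WithLp.toLp 2 fun p => if p.2 = b then u p.1 else 0

lemma sum_slice {n k : ℕ} (v : EuclideanSpace ℂ (Fin n × Fin k)) :
    ∑ a, slice (fun i => v (i, a)) a = v := by
  ext p
  simp [slice]

lemma norm_sq_toEuclideanCLM {ι : Type*} [Fintype ι] [DecidableEq ι] (B : Matrix ι ι ℂ)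
    (x : EuclideanSpace ℂ ι) :
    ((‖toEuclideanCLM (𝕜 := ℂ) B x‖ ^ 2 : ℝ) : ℂ) =
      star x.ofLp ⬝ᵥ ((Bᴴ * B) *ᵥ x.ofLp) := by
  have h := inner_self_eq_norm_sq_to_K (𝕜 := ℂ) (toEuclideanCLM (𝕜 := ℂ) B x)
  rw [EuclideanSpace.inner_eq_star_dotProduct, Matrix.ofLp_toEuclideanCLM] at h
  rw [← Matrix.mulVec_mulVec, Matrix.dotProduct_mulVec, ← Matrix.star_mulVec, dotProduct_comm]
  simpa using h.symm

lemma slice_quadratic {n k : ℕ} (Y : Matrix (Fin n × Fin k) (Fin n × Fin k) ℂ)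
    (u : Fin n → ℂ) (b : Fin k) :
    star (slice u b).ofLp ⬝ᵥ (Y *ᵥ (slice u b).ofLp) =
      ∑ i, ∑ j, star (u i) * (Y (i, b) (j, b) * u j) := by
  simp [slice, dotProduct, mulVec, Fintype.sum_prod_type, Finset.mul_sum, apply_ite]

/-- The partial trace condition, read as a quadratic form in `u`. -/
lemma sum_norm_sq_apply_slice {n k : ℕ} (B : Matrix (Fin n × Fin k) (Fin n × Fin k) ℂ)
    (htr : ∀ i j : Fin n,
      ∑ a : Fin k, (Bᴴ * B) (i, a) (j, a) = if i = j then (k : ℂ) else 0) (u : Fin n → ℂ) :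
    ∑ b, ‖toEuclideanCLM (𝕜 := ℂ) B (slice u b)‖ ^ 2 = k * ∑ i, ‖u i‖ ^ 2 := by
  apply Complex.ofReal_injective
  rw [Complex.ofReal_sum]
  simp only [norm_sq_toEuclideanCLM, slice_quadratic]
  rw [Finset.sum_comm]
  have h (i : Fin n) : ∑ b, ∑ j, star (u i) * ((Bᴴ * B) (i, b) (j, b) * u j) =
      k * (‖u i‖ : ℂ) ^ 2 := by
    rw [Finset.sum_comm]
    simp_rw [← Finset.mul_sum, ← Finset.sum_mul, htr]
    simp only [ite_mul, zero_mul, Finset.sum_ite_eq, Finset.mem_univ, if_true]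
    rw [← Complex.conj_mul', ← starRingEnd_apply]
    ring
  rw [Finset.sum_congr rfl fun i _ => h i]
  simp [Finset.mul_sum]

open scoped MatrixOrder Matrix.Norms.L2Operator in
lemma Matrix.PosSemidef.exists_eq_conjTranspose_mul_self {ι : Type*} [Fintype ι] [DecidableEq ι]
    {Y : Matrix ι ι ℂ} (hY : Y.PosSemidef) : ∃ B : Matrix ι ι ℂ, Y = Bᴴ * B :=
  CStarAlgebra.nonneg_iff_eq_star_mul_self.mp hY.nonneg

/-- if `n > k`, `Y ≥ 0` and `(id_n ⊗ Tr_k)(Y) = k·𝟙ₙ`, then `‖Y‖ ≤ k²`. -/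
theorem norm_le_k_sq (n k : ℕ) (hn : 0 < n) (hk : 0 < k) (hnk : n > k)
    (Y : Matrix (Fin n × Fin k) (Fin n × Fin k) ℂ) (hY : Y.PosSemidef)
    (htr : ∀ i j : Fin n,
      ∑ a : Fin k, Y (i, a) (j, a) = if i = j then (k : ℂ) else 0) :
    l2OpNorm Y ≤ (k : ℝ) ^ 2 := by
  obtain ⟨B, rfl⟩ := hY.exists_eq_conjTranspose_mul_self
  set T := toEuclideanCLM (𝕜 := ℂ) B
  have hnorm : l2OpNorm (Bᴴ * B) = ‖T‖ ^ 2 := by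
    rw [l2OpNorm, ← Matrix.star_eq_conjTranspose, map_mul, map_star, sq]
    exact CStarRing.norm_star_mul_self (x := T)
  rw [hnorm]
  refine pow_le_pow_left₀ (norm_nonneg _) (T.opNorm_le_bound (Nat.cast_nonneg k) fun v => ?_) 2
  have hslice (a : Fin k) : ‖T (slice (fun i => v (i, a)) a)‖ ^ 2 ≤ k * ∑ i, ‖v (i, a)‖ ^ 2 := by
    rw [← sum_norm_sq_apply_slice B htr]
    exact Finset.single_le_sum
      (f := fun b => ‖T (slice (fun i => v (i, a)) b)‖ ^ 2) (fun _ _ => sq_nonneg _)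
      (Finset.mem_univ a)
  refine (sq_le_sq₀ (norm_nonneg _) (by positivity)).mp ?_
  calc ‖T v‖ ^ 2 = ‖∑ a, T (slice (fun i => v (i, a)) a)‖ ^ 2 := by
        rw [← map_sum, sum_slice]
    _ ≤ (∑ a, ‖T (slice (fun i => v (i, a)) a)‖) ^ 2 := by
        gcongr
        exact norm_sum_le _ _
    _ ≤ k * ∑ a, ‖T (slice (fun i => v (i, a)) a)‖ ^ 2 := by
        simpa using sq_sum_le_card_mul_sum_sq (s := Finset.univ)
          (f := fun a => ‖T (slice (fun i => v (i, a)) a)‖)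
    _ ≤ k * ∑ a, k * ∑ i, ‖v (i, a)‖ ^ 2 := by
        gcongr with a
        exact hslice a
    _ = (k * ‖v‖) ^ 2 := by
        rw [mul_pow, EuclideanSpace.norm_sq_eq, Fintype.sum_prod_type_right, ← Finset.mul_sum]
        ring
end

section
/- Let n, k be positive integers. Then the quantum Lovász function of S equals k²: the supremum of the set {r : ℝ | there exist a positive integer m and a positive semidefinite complex matrix Y indexed by (Fin (m·n) × Fin k) × (Fin (m·n) × Fin k) with ∑_{a : Fin k} Y (i,a) (j,a) = (if i = j then k else 0) for all i, j : Fin (m·n), and ‖Y‖ = r} equals k². -/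
/-!
Upper bound. Write `Y = Bᴴ * B` and let `B_a` be the block of columns of `B` with second index `a`.
The hypothesis says `∑ a, B_aᴴ * B_a = k • 1`, so `‖B_a y‖² ≤ k ‖y‖²` for each `a`. Splitting
`x = (x_a)_a` gives `‖B x‖ ≤ √k ∑ a, ‖x_a‖ ≤ k ‖x‖` by Cauchy–Schwarz, hence
`‖Y‖ = ‖B‖² ≤ k²` (`norm_le_sq_of_partial_trace`).

Attainment. Taking `m = k`, identify `Fin (k * n)` with `Fin k × Fin n` and let the rows of
`entangledRows` be the `n` unnormalised maximally entangled vectors `∑ a, e_(a,c) ⊗ e_a`. With `X`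
this matrix, `Y = k • (Xᴴ * X)` is feasible, and `X * Xᴴ = k • 1` gives
`‖Y‖ = k ‖X * Xᴴ‖ = k²` (`exists_norm_eq_sq`).
-/

open Matrix
open scoped ComplexOrder

open scoped Matrix.Norms.L2Operator

lemma l2OpNorm_eq_norm {ι : Type*} [Fintype ι] [DecidableEq ι] (X : Matrix ι ι ℂ) :
    l2OpNorm X = ‖X‖ := rfl

lemma star_dotProduct_eq_norm_sq {ι : Type*} [Fintype ι] (v : ι → ℂ) :
    star v ⬝ᵥ v = ((‖WithLp.toLp 2 v‖ ^ 2 : ℝ) : ℂ) := by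
  rw [dotProduct_comm, ← EuclideanSpace.inner_toLp_toLp, inner_self_eq_norm_sq_to_K]
  push_cast
  rfl

/-- If the squares `Mₐᴴ * Mₐ` add up to `k • 1`, each `Mₐ` is bounded by `√k`. -/
lemma norm_mulVec_sq_le {ι κ : Type*} [Fintype ι] [DecidableEq ι] [Fintype κ] {k : ℕ}
    (M : Fin k → Matrix κ ι ℂ) (hM : ∑ a, (M a)ᴴ * M a = (k : ℂ) • 1) (a : Fin k)
    (y : ι → ℂ) :
    ‖WithLp.toLp 2 (M a *ᵥ y)‖ ^ 2 ≤ k * ‖WithLp.toLp 2 y‖ ^ 2 := by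
  have key : ∑ b, ‖WithLp.toLp 2 (M b *ᵥ y)‖ ^ 2 = k * ‖WithLp.toLp 2 y‖ ^ 2 := by
    have h : star y ⬝ᵥ ((∑ b, (M b)ᴴ * M b) *ᵥ y) = star y ⬝ᵥ (((k : ℂ) • 1) *ᵥ y) := by
      rw [hM]
    rw [Matrix.sum_mulVec, dotProduct_sum, Matrix.smul_mulVec, Matrix.one_mulVec,
      dotProduct_smul, star_dotProduct_eq_norm_sq, smul_eq_mul] at h
    have h' : ∀ b, star y ⬝ᵥ (((M b)ᴴ * M b) *ᵥ y)
        = ((‖WithLp.toLp 2 (M b *ᵥ y)‖ ^ 2 : ℝ) : ℂ) := fun b => by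
      rw [← star_dotProduct_eq_norm_sq, star_mulVec, ← dotProduct_mulVec, mulVec_mulVec]
    simp only [h'] at h
    exact_mod_cast h
  rw [← key]
  exact Finset.single_le_sum (f := fun b => ‖WithLp.toLp 2 (M b *ᵥ y)‖ ^ 2)
    (fun b _ => sq_nonneg _) (Finset.mem_univ a)

lemma norm_le_sq_of_partial_trace {N k : ℕ} (Y : Matrix (Fin N × Fin k) (Fin N × Fin k) ℂ)
    (hY : Y.PosSemidef)
    (htr : ∀ i j : Fin N, ∑ a : Fin k, Y (i, a) (j, a) = if i = j then (k : ℂ) else 0) :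
    ‖Y‖ ≤ (k : ℝ) ^ 2 := by
  obtain ⟨B, rfl⟩ : ∃ B : Matrix (Fin N × Fin k) (Fin N × Fin k) ℂ, Y = Bᴴ * B := by
    open scoped MatrixOrder in
    exact CStarAlgebra.nonneg_iff_eq_star_mul_self.mp hY.nonneg
  let M : Fin k → Matrix (Fin N × Fin k) (Fin N) ℂ := fun a => B.submatrix id (fun i => (i, a))
  have hM : ∑ a, (M a)ᴴ * M a = (k : ℂ) • 1 := by
    ext i j
    rw [Matrix.sum_apply, Matrix.smul_apply, Matrix.one_apply]
    simpa [M, Matrix.mul_apply] using htr i j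
  suffices hB : ‖B‖ ≤ k by
    rw [l2_opNorm_conjTranspose_mul_self, sq]
    gcongr
  rw [← l2_opNorm_toEuclideanCLM]
  refine ContinuousLinearMap.opNorm_le_bound _ (Nat.cast_nonneg k) fun x => ?_
  let s : Fin k → ℝ := fun a => ‖WithLp.toLp 2 (fun i => x (i, a))‖
  have hx : ‖x‖ ^ 2 = ∑ a, s a ^ 2 := by
    simp only [s, EuclideanSpace.norm_sq_eq]
    rw [Fintype.sum_prod_type_right]
  have hBx : toEuclideanCLM (𝕜 := ℂ) B x
      = ∑ a, WithLp.toLp 2 (M a *ᵥ fun i => x (i, a)) := by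
    ext p
    simp [M, Matrix.mulVec, dotProduct, Matrix.ofLp_toEuclideanCLM, Fintype.sum_prod_type_right]
  have h1 : ‖toEuclideanCLM (𝕜 := ℂ) B x‖ ≤ ∑ a, √k * s a := by
    rw [hBx]
    refine (norm_sum_le _ _).trans (Finset.sum_le_sum fun a _ => ?_)
    refine abs_le_of_sq_le_sq' ?_ (by positivity) |>.2
    rw [mul_pow, Real.sq_sqrt (Nat.cast_nonneg k)]
    exact norm_mulVec_sq_le M hM a _
  refine h1.trans (abs_le_of_sq_le_sq' ?_ (by positivity) |>.2)
  have h2 : (∑ a, s a) ^ 2 ≤ k * ∑ a, s a ^ 2 := by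
    simpa using sq_sum_le_card_mul_sum_sq (s := Finset.univ) (f := s)
  rw [← Finset.mul_sum, mul_pow, mul_pow, Real.sq_sqrt (Nat.cast_nonneg k), hx, sq (k : ℝ),
    mul_assoc]
  gcongr

/-- The matrix whose `c`-th row is the unnormalised maximally entangled vector
`∑ a, e_(a,c) ⊗ e_a`, where `Fin (k * n)` is identified with `Fin k × Fin n` through
`finProdFinEquiv`. -/
def entangledRows (n k : ℕ) : Matrix (Fin n) (Fin (k * n) × Fin k) ℂ :=
  fun c p => if finProdFinEquiv.symm p.1 = (p.2, c) then 1 else 0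

lemma entangledRows_mul_conjTranspose (n k : ℕ) :
    entangledRows n k * (entangledRows n k)ᴴ = (k : ℂ) • 1 := by
  ext c c'
  rw [Matrix.mul_apply, Fintype.sum_prod_type_right]
  have h : ∀ a : Fin k, ∑ i : Fin (k * n),
      entangledRows n k c (i, a) * (entangledRows n k)ᴴ (i, a) c'
        = if c = c' then 1 else 0 := fun a => by
    rw [← finProdFinEquiv.sum_comp]
    simp [entangledRows, Matrix.conjTranspose_apply, eq_comm]
  simp only [h]
  simp [Matrix.one_apply]

lemma exists_norm_eq_sq (n k : ℕ) (hn : 0 < n) :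
    ∃ Y : Matrix (Fin (k * n) × Fin k) (Fin (k * n) × Fin k) ℂ,
      Y.PosSemidef ∧
      (∀ i j : Fin (k * n), ∑ a : Fin k, Y (i, a) (j, a) = if i = j then (k : ℂ) else 0) ∧
      ‖Y‖ = (k : ℝ) ^ 2 := by
  have : Nonempty (Fin n) := ⟨⟨0, hn⟩⟩
  refine ⟨(k : ℂ) • ((entangledRows n k)ᴴ * entangledRows n k),
    (posSemidef_conjTranspose_mul_self _).smul (by positivity), fun i j => ?_, ?_⟩
  · have h : ∑ a : Fin k, ∑ c : Fin n,
        (if finProdFinEquiv.symm i = (a, c) then (1 : ℂ) else 0) *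
          (if finProdFinEquiv.symm j = (a, c) then 1 else 0) = if i = j then 1 else 0 := by
      rw [← Fintype.sum_prod_type' (f := fun a c =>
        (if finProdFinEquiv.symm i = (a, c) then (1 : ℂ) else 0) *
          (if finProdFinEquiv.symm j = (a, c) then 1 else 0))]
      simp only [Prod.mk.eta, ite_mul, one_mul, zero_mul, Finset.sum_ite_eq, Finset.mem_univ,
        if_true, EmbeddingLike.apply_eq_iff_eq]
      simp only [eq_comm]
    simp only [Matrix.smul_apply, smul_eq_mul, ← Finset.mul_sum, Matrix.mul_apply,
      Matrix.conjTranspose_apply, entangledRows, apply_ite (star : ℂ → ℂ), star_one, star_zero]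
    rw [h]
    simp
  · have h : ‖entangledRows n k‖ * ‖entangledRows n k‖ = k := by
      rw [← l2_opNorm_conjTranspose (entangledRows n k), ← l2_opNorm_conjTranspose_mul_self,
        conjTranspose_conjTranspose, entangledRows_mul_conjTranspose, norm_smul, norm_one]
      simp
    rw [norm_smul, l2_opNorm_conjTranspose_mul_self, h, sq]
    simp

/-- the quantum Lovász function of `S = B(ℂⁿ) ⊗ 𝟙ₖ` equals `k²`. -/
theorem quantum_lovasz_eq_k_sq (n k : ℕ) (hn : 0 < n) (hk : 0 < k) :
    sSup {r : ℝ | ∃ m : ℕ, 0 < m ∧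
      ∃ Y : Matrix (Fin (m * n) × Fin k) (Fin (m * n) × Fin k) ℂ,
        Y.PosSemidef ∧
        (∀ i j : Fin (m * n),
          ∑ a : Fin k, Y (i, a) (j, a) = if i = j then (k : ℂ) else 0) ∧
        l2OpNorm Y = r} = (k : ℝ) ^ 2 := by
  apply IsGreatest.csSup_eq
  constructor
  · obtain ⟨Y, hY, htr, hnorm⟩ := exists_norm_eq_sq n k hn
    exact ⟨k, hk, Y, hY, htr, hnorm⟩
  · rintro r ⟨m, -, Y, hY, htr, rfl⟩
    exact norm_le_sq_of_partial_trace Y hY htr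
end
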